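/- Let f : ℝ → ℝ be operator monotone on [0,∞) with f(x) > 0 for x > 0, and let A, B be complex matrices with m·I ≤ A ≤ M·I and m·I ≤ B ≤ M·I for some scalars 0 < m < M. Then f(A) ♯ f(B) ≤ ((M+m)/(2√(Mm)))·f(A ♯ B). -/

import Mathlib

/-!
An operator monotone `f` is concave for the Loewner order. Indeed `[A, B; Bᴴ, D]` is dominated by
`(A + ε) ⊕ (D + ε⁻¹ Bᴴ B)`, so applying `f`, reading off the upper left corner and letting `ε → 0`
shows that the corner of `f` of a positive block matrix is at most `f` of its corner; conjugating
`A ⊕ B` by a rotation turns this into concavity. Since `f 0 ≥ 0`, concavity also gives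
`f (K X) ≤ K f X` for `K ≥ 1`. With `∇` the arithmetic mean and `K = (M + m) / (2 √(M m))`, the
bound follows from
`f A ♯ f B ≤ f A ∇ f B ≤ f (A ∇ B) ≤ f (K (A ♯ B)) ≤ K f (A ♯ B)`,
where `A ∇ B ≤ K (A ♯ B)` reduces to a scalar inequality on the spectrum of `A^{-1/2} B A^{-1/2}`,
which lies in `[m / M, M / m]`.
-/

open Matrix ComplexOrder

/-- Loewner order: `A ≤ B` iff `B - A` is positive semidefinite. -/
def LoewnerLE {n : Type} [Fintype n] (A B : Matrix n n ℂ) : Prop := (B - A).PosSemidef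

/-- The positive square root of a (Hermitian) matrix, via the continuous functional calculus. -/
noncomputable def msqrt {n : Type} [Fintype n] [DecidableEq n] (A : Matrix n n ℂ) :
    Matrix n n ℂ := cfc Real.sqrt A

/-- The arithmetic mean `A ∇ B = (A + B)/2`. -/
noncomputable def amean {n : Type} [Fintype n] [DecidableEq n] (A B : Matrix n n ℂ) :
    Matrix n n ℂ := (2 : ℝ)⁻¹ • (A + B)

/-- The harmonic mean `A ! B = ((A⁻¹ + B⁻¹)/2)⁻¹`. -/
noncomputable def hmean {n : Type} [Fintype n] [DecidableEq n] (A B : Matrix n n ℂ) :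
    Matrix n n ℂ := ((2 : ℝ)⁻¹ • (A⁻¹ + B⁻¹))⁻¹

/-- The geometric mean `A ♯ B = A^(1/2) (A^(-1/2) B A^(-1/2))^(1/2) A^(1/2)`. -/
noncomputable def gmean {n : Type} [Fintype n] [DecidableEq n] (A B : Matrix n n ℂ) :
    Matrix n n ℂ := msqrt A * msqrt ((msqrt A)⁻¹ * B * (msqrt A)⁻¹) * msqrt A

/-- `f : ℝ → ℝ` is operator monotone on `[0,∞)`: it is continuous and nonnegative on `[0,∞)`
and monotone on positive-semidefinite complex matrices of every finite size, with `f` applied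
via the continuous functional calculus. -/
def OpMonotone (f : ℝ → ℝ) : Prop :=
  ContinuousOn f (Set.Ici 0) ∧ (∀ x : ℝ, 0 ≤ x → 0 ≤ f x) ∧
    ∀ (k : Type) [Fintype k] [DecidableEq k] (X Y : Matrix k k ℂ),
      X.PosSemidef → LoewnerLE X Y → LoewnerLE (cfc f X) (cfc f Y)

/-- `g : ℝ → ℝ` is operator monotone decreasing on `(0,∞)`: it is continuous and nonnegative on
`(0,∞)` and antitone on positive-definite complex matrices of every finite size, with `g` applied
via the continuous functional calculus. -/
def OpAntitone (g : ℝ → ℝ) : Prop :=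
  ContinuousOn g (Set.Ioi 0) ∧ (∀ x : ℝ, 0 < x → 0 ≤ g x) ∧
    ∀ (k : Type) [Fintype k] [DecidableEq k] (X Y : Matrix k k ℂ),
      X.PosDef → Y.PosDef → LoewnerLE X Y → LoewnerLE (cfc g Y) (cfc g X)

open Filter Topology
open scoped MatrixOrder

section BlockMatrix

variable {𝕜 : Type*} [RCLike 𝕜] {m n : Type*}

lemma posSemidef_fromBlocks_diagonal [Finite m] [Finite n] {A : Matrix m m 𝕜} {B : Matrix n n 𝕜}
    (hA : A.PosSemidef) (hB : B.PosSemidef) : (fromBlocks A 0 0 B).PosSemidef := by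
  classical
  have := Fintype.ofFinite m
  have := Fintype.ofFinite n
  obtain ⟨P, rfl⟩ := CStarAlgebra.nonneg_iff_eq_star_mul_self.1 hA.nonneg
  obtain ⟨Q, rfl⟩ := CStarAlgebra.nonneg_iff_eq_star_mul_self.1 hB.nonneg
  simpa [star_eq_conjTranspose, fromBlocks_conjTranspose, fromBlocks_multiply] using
    posSemidef_conjTranspose_mul_self (fromBlocks P 0 0 Q)

lemma fromBlocks_le_fromBlocks_diagonal [Fintype m] [DecidableEq m] [Finite n]
    (A : Matrix m m 𝕜) (B : Matrix m n 𝕜) (D : Matrix n n 𝕜) {ε : ℝ} (hε : 0 < ε) :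
    fromBlocks A B Bᴴ D ≤ fromBlocks (A + ε • 1) 0 0 (D + ε⁻¹ • (Bᴴ * B)) := by
  let C : Matrix m (m ⊕ n) 𝕜 := fromCols (ε • 1) (-B)
  have hC : fromBlocks (A + ε • 1) 0 0 (D + ε⁻¹ • (Bᴴ * B)) - fromBlocks A B Bᴴ D =
      ε⁻¹ • (Cᴴ * C) := by
    rw [conjTranspose_fromCols_eq_fromRows_conjTranspose, fromRows_mul_fromCols]
    simp [sub_eq_add_neg, fromBlocks_neg, fromBlocks_add, fromBlocks_smul, smul_smul, hε.ne']
  rw [le_iff, hC]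
  exact (posSemidef_conjTranspose_mul_self C).smul (inv_nonneg.2 hε.le)

variable [Fintype m] [Fintype n] [DecidableEq m] [DecidableEq n]

lemma aeval_fromBlocks_diagonal (p : Polynomial ℝ) (A : Matrix m m 𝕜) (B : Matrix n n 𝕜) :
    p.aeval (fromBlocks A 0 0 B) = fromBlocks (p.aeval A) 0 0 (p.aeval B) := by
  induction p using Polynomial.induction_on' with
  | add p q hp hq => simp [hp, hq, fromBlocks_add]
  | monomial k r =>
    simp [Polynomial.aeval_monomial, ← Algebra.smul_def, fromBlocks_diagonal_pow, fromBlocks_smul]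

lemma cfc_eq_aeval_interpolate (f : ℝ → ℝ) {A : Matrix n n 𝕜} (hA : A.IsHermitian)
    {s : Finset ℝ} (hs : spectrum ℝ A ⊆ s) :
    cfc f A = (Lagrange.interpolate s id f).aeval A := by
  rw [← cfc_polynomial _ A hA]
  exact cfc_congr fun x hx =>
    (Lagrange.eval_interpolate_at_node f Function.injective_id.injOn (hs hx)).symm

lemma cfc_fromBlocks_diagonal (f : ℝ → ℝ) {A : Matrix m m 𝕜} {B : Matrix n n 𝕜}
    (hA : A.IsHermitian) (hB : B.IsHermitian) :
    cfc f (fromBlocks A 0 0 B) = fromBlocks (cfc f A) 0 0 (cfc f B) := by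
  obtain ⟨s, hs⟩ : ∃ s : Finset ℝ,
      spectrum ℝ A ∪ spectrum ℝ B ∪ spectrum ℝ (fromBlocks A 0 0 B) ⊆ s :=
    (((finite_real_spectrum.union finite_real_spectrum).union
      finite_real_spectrum).exists_finset_coe).imp fun _ h => h.ge
  simp only [Set.union_subset_iff] at hs
  rw [cfc_eq_aeval_interpolate f (hA.fromBlocks (by simp) hB) hs.2, aeval_fromBlocks_diagonal,
    ← cfc_eq_aeval_interpolate f hA hs.1.1, ← cfc_eq_aeval_interpolate f hB hs.1.2]

lemma cfc_mul_mul_conjTranspose (f : ℝ → ℝ) {U A : Matrix n n 𝕜} (hU : U ∈ unitaryGroup n 𝕜)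
    (hA : A.IsHermitian) : cfc f (U * A * Uᴴ) = U * cfc f A * Uᴴ :=
  (StarAlgHomClass.map_cfc (S := ℝ) (Unitary.conjStarAlgAut ℝ _ (⟨U, hU⟩ : unitaryGroup n 𝕜))
    f A (finite_real_spectrum.continuousOn f)
    (by change Continuous fun X => U * X * Uᴴ; fun_prop) hA (IsSelfAdjoint.map hA _)).symm

/-- The real rotation matrix with first row `(c, s)`, acting on pairs of vectors. It conjugates
`A ⊕ B` to a matrix whose corner is the combination `c² A + s² B`. -/
def blockRotation (𝕜 n : Type*) [RCLike 𝕜] [DecidableEq n] (c s : ℝ) : Matrix (n ⊕ n) (n ⊕ n) 𝕜 :=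
  fromBlocks (c • 1) (s • 1) (-s • 1) (c • 1)

lemma blockRotation_mem_unitaryGroup {c s : ℝ} (h : c ^ 2 + s ^ 2 = 1) :
    blockRotation 𝕜 n c s ∈ unitaryGroup (n ⊕ n) 𝕜 := by
  rw [mem_unitaryGroup_iff, ← fromBlocks_one]
  have h' : c * c + s * s = 1 := by linarith
  simp [blockRotation, star_eq_conjTranspose, fromBlocks_conjTranspose, fromBlocks_multiply,
    smul_smul, ← add_smul, h', mul_comm c s, add_comm (s * s)]

lemma blockRotation_conj_fromBlocks_diagonal (c s : ℝ) (A B : Matrix n n 𝕜) :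
    blockRotation 𝕜 n c s * fromBlocks A 0 0 B * (blockRotation 𝕜 n c s)ᴴ =
      fromBlocks (c ^ 2 • A + s ^ 2 • B) ((c * s) • (B - A)) ((c * s) • (B - A))
        (s ^ 2 • A + c ^ 2 • B) := by
  simp only [blockRotation, fromBlocks_conjTranspose, fromBlocks_multiply, conjTranspose_smul,
    conjTranspose_one, star_trivial, smul_mul_assoc, mul_smul_comm, one_mul, mul_one, smul_smul,
    mul_zero, zero_add, add_zero]
  congr 1 <;> module

end BlockMatrix

lemma posDef_cfc {𝕜 n : Type*} [RCLike 𝕜] [Fintype n] [DecidableEq n] {f : ℝ → ℝ}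
    {A : Matrix n n 𝕜} (hf : ∀ x, 0 < x → 0 < f x) (hA : A.PosDef) : (cfc f A).PosDef := by
  have hsa := hA.isHermitian.isSelfAdjoint
  have hspec := (StarOrderedRing.isStrictlyPositive_iff_spectrum_pos (R := ℝ) A hsa).1
    hA.isStrictlyPositive
  exact ((cfc_isStrictlyPositive_iff f A (finite_real_spectrum.continuousOn f) hsa).2
    fun x hx => hf x (hspec x hx)).posDef

lemma posDef_of_smul_one_le {𝕜 n : Type*} [RCLike 𝕜] [DecidableEq n] {A : Matrix n n 𝕜} {m : ℝ}
    (hm : 0 < m) (h : m • 1 ≤ A) : A.PosDef := by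
  simpa using (PosDef.one.smul hm).add_posSemidef (le_iff.1 h)

theorem tendsto_cfc_add_smul_one {n : Type*} [Fintype n] [DecidableEq n] {f : ℝ → ℝ}
    (hf : ContinuousOn f (Set.Ici 0)) {X : Matrix n n ℂ} (hX : X.PosSemidef) :
    Tendsto (fun ε : ℝ => cfc f (X + ε • 1)) (𝓝[>] 0) (𝓝 (cfc f X)) := by
  open scoped Matrix.Norms.L2Operator in
  have hX_le : X ≤ ‖X‖ • 1 := by
    simpa [Algebra.algebraMap_eq_smul_one] using
      hX.isHermitian.isSelfAdjoint.le_algebraMap_norm_self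
  have hlim : Tendsto (fun ε : ℝ => X + ε • (1 : Matrix n n ℂ)) (𝓝[>] 0) (𝓝 X) := by
    have : Continuous fun ε : ℝ => X + ε • (1 : Matrix n n ℂ) := by fun_prop
    simpa using (this.tendsto 0).mono_left nhdsWithin_le_nhds
  have hspec {Y : Matrix n n ℂ} (h0 : 0 ≤ Y) (h1 : Y ≤ (‖X‖ + 1) • 1) :
      spectrum ℝ Y ⊆ Set.Icc 0 (‖X‖ + 1) := by
    rw [← Algebra.algebraMap_eq_smul_one,
      le_algebraMap_iff_spectrum_le h0.posSemidef.isHermitian.isSelfAdjoint] at h1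
    exact fun x hx => ⟨spectrum_nonneg_of_nonneg h0 hx, h1 x hx⟩
  have hsum {ε : ℝ} (h0 : 0 ≤ ε) : 0 ≤ X + ε • 1 :=
    add_nonneg hX.nonneg (smul_nonneg h0 PosSemidef.one.nonneg)
  refine hlim.cfc (isCompact_Icc (a := 0) (b := ‖X‖ + 1)) f ?_ ?_ ?_ hX.isHermitian
    (hf.mono Set.Icc_subset_Ici_self)
  · filter_upwards [Ioc_mem_nhdsGT one_pos] with ε hε
    refine hspec (hsum hε.1.le) ?_
    rw [add_smul]
    exact add_le_add hX_le (smul_le_smul_of_nonneg_right hε.2 PosSemidef.one.nonneg)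
  · filter_upwards [self_mem_nhdsWithin] with ε hε
    exact (hsum hε.le).posSemidef.isHermitian
  · exact hspec hX.nonneg
      (hX_le.trans (smul_le_smul_of_nonneg_right (by simp) PosSemidef.one.nonneg))

namespace OpMonotone

variable {f : ℝ → ℝ} {m n : Type} [Fintype m] [DecidableEq m] [Fintype n] [DecidableEq n]

lemma cfc_le_cfc (hf : OpMonotone f) {X Y : Matrix n n ℂ} (hX : X.PosSemidef) (hXY : X ≤ Y) :
    cfc f X ≤ cfc f Y :=
  hf.2.2 n X Y hX hXY

theorem toBlocks₁₁_cfc_le (hf : OpMonotone f) {A : Matrix m m ℂ} {B : Matrix m n ℂ}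
    {D : Matrix n n ℂ} (h : (fromBlocks A B Bᴴ D).PosSemidef) :
    (cfc f (fromBlocks A B Bᴴ D)).toBlocks₁₁ ≤ cfc f A := by
  have hA : A.PosSemidef := h.submatrix Sum.inl
  have hD : D.PosSemidef := h.submatrix Sum.inr
  have hpert (ε : ℝ) (hε : 0 < ε) :
      (cfc f (fromBlocks A B Bᴴ D)).toBlocks₁₁ ≤ cfc f (A + ε • 1) := by
    have hle := hf.cfc_le_cfc h (fromBlocks_le_fromBlocks_diagonal A B D hε)
    rw [cfc_fromBlocks_diagonal f
      (hA.isHermitian.add (isHermitian_one.smul (.all ε)))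
      (hD.isHermitian.add ((isHermitian_conjTranspose_mul_self B).smul (.all ε⁻¹)))] at hle
    exact (le_iff.1 hle).submatrix Sum.inl
  open scoped Matrix.Norms.L2Operator in
  exact ge_of_tendsto (tendsto_cfc_add_smul_one hf.1 hA) (eventually_mem_nhdsWithin.mono hpert)

theorem concaveOn_cfc (hf : OpMonotone f) :
    ConcaveOn ℝ (Set.Ici (0 : Matrix n n ℂ)) (cfc f) := by
  refine ⟨convex_Ici 0, fun A hA B hB a b ha hb hab => ?_⟩
  obtain ⟨c, rfl⟩ : ∃ c : ℝ, c ^ 2 = a := ⟨√a, Real.sq_sqrt ha⟩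
  obtain ⟨s, rfl⟩ : ∃ s : ℝ, s ^ 2 = b := ⟨√b, Real.sq_sqrt hb⟩
  replace hA := hA.posSemidef
  replace hB := hB.posSemidef
  have hAB := posSemidef_fromBlocks_diagonal hA hB
  have hrot := blockRotation_conj_fromBlocks_diagonal c s A B
  have hoff : ((c * s) • (B - A))ᴴ = (c * s) • (B - A) :=
    (hB.isHermitian.sub hA.isHermitian).smul (.all _)
  have hcorner := hf.toBlocks₁₁_cfc_le (A := c ^ 2 • A + s ^ 2 • B) (B := (c * s) • (B - A))
    (D := s ^ 2 • A + c ^ 2 • B)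
    (by rw [hoff, ← hrot]; exact hAB.mul_mul_conjTranspose_same _)
  rwa [hoff, ← hrot,
    cfc_mul_mul_conjTranspose f (blockRotation_mem_unitaryGroup hab) hAB.isHermitian,
    cfc_fromBlocks_diagonal f hA.isHermitian hB.isHermitian,
    blockRotation_conj_fromBlocks_diagonal, toBlocks_fromBlocks₁₁] at hcorner

theorem cfc_smul_le (hf : OpMonotone f) {X : Matrix n n ℂ} (hX : X.PosSemidef) {K : ℝ}
    (hK : 1 ≤ K) : cfc f (K • X) ≤ K • cfc f X := by
  have hK0 : 0 < K := one_pos.trans_le hK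
  have hf0 : 0 ≤ cfc f (0 : Matrix n n ℂ) :=
    cfc_nonneg fun x hx => hf.2.1 x (spectrum_nonneg_of_nonneg le_rfl hx)
  have hconc := hf.concaveOn_cfc.2 (Set.mem_Ici.2 le_rfl)
    (Set.mem_Ici.2 (smul_nonneg hK0.le hX.nonneg)) (sub_nonneg.2 (inv_le_one_of_one_le₀ hK))
    (inv_nonneg.2 hK0.le) (sub_add_cancel 1 K⁻¹)
  rw [smul_zero, zero_add, inv_smul_smul₀ hK0.ne'] at hconc
  rw [← inv_smul_le_iff_of_pos hK0]
  exact (le_add_of_nonneg_left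
    (smul_nonneg (sub_nonneg.2 (inv_le_one_of_one_le₀ hK)) hf0)).trans hconc

theorem amean_cfc_le (hf : OpMonotone f) {A B : Matrix n n ℂ} (hA : A.PosSemidef)
    (hB : B.PosSemidef) : amean (cfc f A) (cfc f B) ≤ cfc f (amean A B) := by
  have h2 : (0 : ℝ) ≤ 2⁻¹ := by norm_num
  simpa only [amean, smul_add] using
    hf.concaveOn_cfc.2 (Set.mem_Ici.2 hA.nonneg) (Set.mem_Ici.2 hB.nonneg) h2 h2 (by norm_num)

end OpMonotone

section Mean

variable {n : Type} [Fintype n] [DecidableEq n] {A B : Matrix n n ℂ} {m M : ℝ}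

lemma isHermitian_msqrt (A : Matrix n n ℂ) : (msqrt A).IsHermitian :=
  cfc_predicate Real.sqrt A

lemma msqrt_mul_msqrt (hA : A.PosSemidef) : msqrt A * msqrt A = A := by
  have hcont := (finite_real_spectrum (A := A)).continuousOn Real.sqrt
  rw [msqrt, ← cfc_mul _ _ A hcont hcont]
  conv_rhs => rw [← cfc_id ℝ A hA.isHermitian.isSelfAdjoint]
  exact cfc_congr fun x hx => Real.mul_self_sqrt (spectrum_nonneg_of_nonneg hA.nonneg hx)

lemma isUnit_det_msqrt (hA : A.PosDef) : IsUnit (msqrt A).det :=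
  (isUnit_iff_isUnit_det _).1 (posDef_cfc (fun _ => Real.sqrt_pos.2) hA).isUnit

/-- The relative matrix `A^{-1/2} B A^{-1/2}`, the noncommutative analogue of `B / A`. -/
noncomputable def symmQuotient (A B : Matrix n n ℂ) : Matrix n n ℂ :=
  (msqrt A)⁻¹ * B * (msqrt A)⁻¹

/-- The operator perspective `A^{1/2} h(A^{-1/2} B A^{-1/2}) A^{1/2}` of a scalar function `h`. It
reduces inequalities between operator means of `A` and `B` to scalar ones. -/
noncomputable def perspective (h : ℝ → ℝ) (A B : Matrix n n ℂ) : Matrix n n ℂ :=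
  msqrt A * cfc h (symmQuotient A B) * msqrt A

lemma gmean_eq_perspective (A B : Matrix n n ℂ) : gmean A B = perspective Real.sqrt A B := rfl

lemma symmQuotient_le_symmQuotient (A : Matrix n n ℂ) {B C : Matrix n n ℂ} (h : B ≤ C) :
    symmQuotient A B ≤ symmQuotient A C := by
  simpa only [symmQuotient, star_eq_conjTranspose, (isHermitian_msqrt A).inv.eq] using
    star_left_conjugate_le_conjugate h (msqrt A)⁻¹

lemma symmQuotient_smul_self (hA : A.PosDef) (u : ℝ) :
    symmQuotient A (u • A) = algebraMap ℝ (Matrix n n ℂ) u := by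
  have hS := isUnit_det_msqrt hA
  rw [symmQuotient]
  nth_rw 2 [← msqrt_mul_msqrt hA.posSemidef]
  rw [mul_smul_comm, smul_mul_assoc, nonsing_inv_mul_cancel_left _ _ hS, mul_nonsing_inv _ hS,
    Algebra.algebraMap_eq_smul_one]

lemma isSelfAdjoint_symmQuotient (A : Matrix n n ℂ) (hB : B.IsHermitian) :
    IsSelfAdjoint (symmQuotient A B) := by
  have hconj := isHermitian_mul_mul_conjTranspose (msqrt A)⁻¹ hB
  rwa [(isHermitian_msqrt A).inv.eq] at hconj

lemma le_of_mem_spectrum_symmQuotient (hA : A.PosDef) (hB : B.IsHermitian) {u x : ℝ}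
    (h : u • A ≤ B) (hx : x ∈ spectrum ℝ (symmQuotient A B)) : u ≤ x :=
  (algebraMap_le_iff_le_spectrum (isSelfAdjoint_symmQuotient A hB)).1
    (symmQuotient_smul_self hA u ▸ symmQuotient_le_symmQuotient A h) x hx

lemma mem_spectrum_symmQuotient_le (hA : A.PosDef) (hB : B.IsHermitian) {v x : ℝ}
    (h : B ≤ v • A) (hx : x ∈ spectrum ℝ (symmQuotient A B)) : x ≤ v :=
  (le_algebraMap_iff_spectrum_le (isSelfAdjoint_symmQuotient A hB)).1
    (symmQuotient_smul_self hA v ▸ symmQuotient_le_symmQuotient A h) x hx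

lemma perspective_mono {g h : ℝ → ℝ} (hgh : ∀ x ∈ spectrum ℝ (symmQuotient A B), g x ≤ h x) :
    perspective g A B ≤ perspective h A B := by
  have hcfc : cfc g (symmQuotient A B) ≤ cfc h (symmQuotient A B) :=
    cfc_mono hgh (finite_real_spectrum.continuousOn g) (finite_real_spectrum.continuousOn h)
  simpa only [perspective, star_eq_conjTranspose, (isHermitian_msqrt A).eq] using
    star_left_conjugate_le_conjugate hcfc (msqrt A)

lemma perspective_const_mul (c : ℝ) (h : ℝ → ℝ) (A B : Matrix n n ℂ) :
    perspective (fun x => c * h x) A B = c • perspective h A B := by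
  rw [perspective, cfc_const_mul c h _ (finite_real_spectrum.continuousOn h), mul_smul_comm,
    smul_mul_assoc, perspective]

lemma amean_eq_perspective (hA : A.PosDef) (hB : B.IsHermitian) :
    amean A B = perspective (fun x => (1 + x) / 2) A B := by
  have hS := isUnit_det_msqrt hA
  have hT := isSelfAdjoint_symmQuotient A hB
  have hcfc : cfc (fun x : ℝ => 2⁻¹ * (1 + x)) (symmQuotient A B) =
      (2 : ℝ)⁻¹ • (1 + symmQuotient A B) := by
    rw [cfc_const_mul _ _ _ (finite_real_spectrum.continuousOn _), 
      cfc_const_add 1 _ _ (finite_real_spectrum.continuousOn _) hT, cfc_id' ℝ _ hT, map_one]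
  have hB' : msqrt A * symmQuotient A B * msqrt A = B := by
    rw [symmQuotient, mul_assoc, nonsing_inv_mul_cancel_right _ _ hS,
      mul_nonsing_inv_cancel_left _ _ hS]
  simp only [div_eq_inv_mul]
  rw [perspective, hcfc, mul_smul_comm, smul_mul_assoc, mul_add, add_mul, mul_one, hB',
    msqrt_mul_msqrt hA.posSemidef, amean]

lemma posSemidef_gmean (A B : Matrix n n ℂ) : (gmean A B).PosSemidef := by
  have hsqrt : 0 ≤ msqrt (symmQuotient A B) := cfc_nonneg fun x _ => Real.sqrt_nonneg x
  simpa only [gmean, symmQuotient, (isHermitian_msqrt A).eq] using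
    hsqrt.posSemidef.conjTranspose_mul_mul_same (msqrt A)

theorem gmean_le_amean (hA : A.PosDef) (hB : B.PosSemidef) : gmean A B ≤ amean A B := by
  rw [gmean_eq_perspective, amean_eq_perspective hA hB.isHermitian]
  refine perspective_mono fun x hx => ?_
  have hx0 : 0 ≤ x := le_of_mem_spectrum_symmQuotient hA hB.isHermitian
    (by simpa using hB.nonneg) hx
  nlinarith [Real.sq_sqrt hx0, sq_nonneg (√x - 1)]

lemma one_le_add_div_two_mul_sqrt (hm : 0 < m) (hM : 0 < M) : 1 ≤ (M + m) / (2 * √(M * m)) := by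
  rw [one_le_div (by positivity), Real.sqrt_mul hM.le, ← mul_assoc]
  simpa only [Real.sq_sqrt hm.le, Real.sq_sqrt hM.le] using two_mul_le_add_sq √M √m

-- Squaring both sides, this is `0 ≤ (M x - m) (M - m x)`.
lemma one_add_div_two_le_mul_sqrt (hm : 0 < m) (hM : 0 < M) {x : ℝ} (hmx : m / M ≤ x)
    (hxM : x ≤ M / m) : (1 + x) / 2 ≤ (M + m) / (2 * √(M * m)) * √x := by
  have hx : 0 ≤ x := (div_pos hm hM).le.trans hmx
  rw [div_le_iff₀ hM] at hmx
  rw [le_div_iff₀ hm] at hxM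
  have hsq : (1 + x) * √(M * m) ≤ (M + m) * √x := by
    refine le_of_sq_le_sq ?_ (by positivity)
    rw [mul_pow, mul_pow, Real.sq_sqrt (by positivity), Real.sq_sqrt hx]
    nlinarith [mul_nonneg (sub_nonneg.2 hmx) (sub_nonneg.2 hxM)]
  rw [div_mul_eq_mul_div, div_le_div_iff₀ two_pos (by positivity)]
  linarith

theorem amean_le_smul_gmean (hA : A.PosDef) (hB : B.IsHermitian) (hm : 0 < m) (hM : 0 < M)
    (hAB : m • A ≤ M • B) (hBA : m • B ≤ M • A) :
    amean A B ≤ ((M + m) / (2 * √(M * m))) • gmean A B := by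
  have hlower : (m / M) • A ≤ B := by
    rwa [div_eq_inv_mul, mul_smul, inv_smul_le_iff_of_pos hM]
  have hupper : B ≤ (M / m) • A := by
    rwa [div_eq_inv_mul, mul_smul, le_inv_smul_iff_of_pos hm]
  rw [gmean_eq_perspective, amean_eq_perspective hA hB, ← perspective_const_mul]
  exact perspective_mono fun x hx => one_add_div_two_le_mul_sqrt hm hM
    (le_of_mem_spectrum_symmQuotient hA hB hlower hx) (mem_spectrum_symmQuotient_le hA hB hupper hx)

end Mean

theorem OpMonotone.gmean_cfc_le_smul_cfc_gmean {f : ℝ → ℝ} {n : Type} [Fintype n] [DecidableEq n]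
    {A B : Matrix n n ℂ} (hf : OpMonotone f) (hf' : ∀ x, 0 < x → 0 < f x) (hA : A.PosDef)
    (hB : B.PosSemidef) {K : ℝ} (hK : 1 ≤ K) (hmean : amean A B ≤ K • gmean A B) :
    gmean (cfc f A) (cfc f B) ≤ K • cfc f (gmean A B) := by
  have hfB : 0 ≤ cfc f B :=
    cfc_nonneg fun x hx => hf.2.1 x (spectrum_nonneg_of_nonneg hB.nonneg hx)
  have hamean : (amean A B).PosSemidef := (hA.posSemidef.add hB).smul (by norm_num)
  calc gmean (cfc f A) (cfc f B)
      ≤ amean (cfc f A) (cfc f B) := gmean_le_amean (posDef_cfc hf' hA) hfB.posSemidef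
    _ ≤ cfc f (amean A B) := hf.amean_cfc_le hA.posSemidef hB
    _ ≤ cfc f (K • gmean A B) := hf.cfc_le_cfc hamean hmean
    _ ≤ K • cfc f (gmean A B) := hf.cfc_smul_le (posSemidef_gmean A B) hK

theorem geom_mean_monotone_reverse_general {ι : Type} [Fintype ι] [DecidableEq ι]
    (f : ℝ → ℝ) (hf : OpMonotone f) (hf' : ∀ x : ℝ, 0 < x → 0 < f x)
    (A B : Matrix ι ι ℂ) (m M : ℝ) (hm : 0 < m) (hM : 0 < M) (hA : A.PosDef)
    (hAB : LoewnerLE (m • A) (M • B)) (hBA : LoewnerLE (m • B) (M • A)) :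
    LoewnerLE (gmean (cfc f A) (cfc f B))
      (((M + m) / (2 * Real.sqrt (M * m))) • cfc f (gmean A B)) := by
  have hB : 0 ≤ B :=
    (smul_nonneg_iff_nonneg_of_pos_left hM).1 ((smul_nonneg hm.le hA.posSemidef.nonneg).trans hAB)
  exact hf.gmean_cfc_le_smul_cfc_gmean hf' hA hB.posSemidef (one_le_add_div_two_mul_sqrt hm hM)
    (amean_le_smul_gmean hA hB.posSemidef.isHermitian hm hM hAB hBA)

lemma smul_le_smul_of_le_smul_of_smul_le {E : Type*} [AddCommGroup E] [PartialOrder E] [Module ℝ E]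
    [PosSMulMono ℝ E] {a b e : E} {m M : ℝ} (hm : 0 ≤ m) (hM : 0 ≤ M) (ha : a ≤ M • e)
    (hb : m • e ≤ b) : m • a ≤ M • b :=
  calc m • a ≤ m • M • e := smul_le_smul_of_nonneg_left ha hm
    _ = M • m • e := smul_comm m M e
    _ ≤ M • b := smul_le_smul_of_nonneg_left hb hM

theorem geom_mean_monotone_reverse {ι : Type} [Fintype ι] [DecidableEq ι]
    (f : ℝ → ℝ) (hf : OpMonotone f) (hf' : ∀ x : ℝ, 0 < x → 0 < f x)
    (A B : Matrix ι ι ℂ) (m M : ℝ) (hm : 0 < m) (hmM : m < M)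
    (hA1 : LoewnerLE (m • (1 : Matrix ι ι ℂ)) A) (hA2 : LoewnerLE A (M • (1 : Matrix ι ι ℂ)))
    (hB1 : LoewnerLE (m • (1 : Matrix ι ι ℂ)) B) (hB2 : LoewnerLE B (M • (1 : Matrix ι ι ℂ))) :
    LoewnerLE (gmean (cfc f A) (cfc f B))
      (((M + m) / (2 * Real.sqrt (M * m))) • cfc f (gmean A B)) := by
  have hM : 0 < M := hm.trans hmM
  have hAB : m • A ≤ M • B := smul_le_smul_of_le_smul_of_smul_le hm.le hM.le hA2 hB1
  have hBA : m • B ≤ M • A := smul_le_smul_of_le_smul_of_smul_le hm.le hM.le hB2 hA1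
  exact geom_mean_monotone_reverse_general f hf hf' A B m M hm hM (posDef_of_smul_one_le hm hA1)
    hAB hBA
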